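/- Let Ω ⊆ ℝ^d be open, 0 ≤ ℓ ≤ d an integer, and μ a positive Radon measure on Ω with Lebesgue decomposition μ = μ^{ac} L^d + μ^s. Let x ∈ Ω be a point with μ^s(B_r(x)) > 0 for all small r > 0, and assume that every probability tangent measure τ ∈ Tan(μ^s, x) can be written on B_1 as a finite sum τ = τ_1 + ⋯ + τ_k where each τ_h is a positive measure that is V_h-invariant on B_1 for some subspace V_h ⊆ ℝ^d with dim V_h ≥ ℓ. Then the upper κ-density of μ^s at x vanishes for every κ ∈ [0, ℓ): limsup_{r↓0} μ^s(B_r(x))/r^κ = 0. -/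

import Mathlib

/-!
The density estimate follows by blow-up and compactness.

A measure on the unit ball that is invariant along a subspace of dimension at least `ℓ` spreads its
mass along that subspace. By invariance, a bump function near the origin has the same integral as
each of its `M ^ ℓ` disjointly supported translates along a grid in the subspace, so it carries at
most a fraction `M ^ (-ℓ)` of the total mass, where the size `s = 1 / (8 M ℓ)` of the bump is
comparable to `1 / M` (`VInvariantOn.pow_mul_integral_bump_le`). The constant does not depend on the
subspace, so the same bound holds for finite sums of measures invariant along different subspaces
(`pow_mul_integral_bump_le_of_split`), hence for every tangent measure.

Given `κ < κ' < ℓ`, choose `M` so large that `M ^ (-ℓ) < s ^ κ'`. If `μ^s(B_{s r}) > s ^ κ' μ^s(B_r)`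
held at arbitrarily small scales, a subsequence of the corresponding blow-ups would converge
(`exists_isProbTangent_of_seq`) to a tangent measure violating the bound. Therefore
`μ^s(B_{s r}) ≤ s ^ κ' μ^s(B_r)` at all small scales (`eventually_decay_of_split`), and iterating
yields `μ^s(B_r) = O(r ^ κ')`, which is `o(r ^ κ)` (`tendsto_div_rpow_zero_of_decay`).
-/

open MeasureTheory Metric Filter
open scoped ENNReal RealInnerProductSpace Topology

/-- The normalized blow-up `γ = ν(B_r(x))⁻¹ · ((T^{r,x})_# ν) ⌞ B₁` of a positive measure `ν` at
`x` at scale `r`, where `T^{r,x}(y) = (y − x)/r`. -/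
noncomputable def blowUp {d : ℕ} (ν : Measure (EuclideanSpace ℝ (Fin d)))
    (x : EuclideanSpace ℝ (Fin d)) (r : ℝ) : Measure (EuclideanSpace ℝ (Fin d)) :=
  (ν (ball x r))⁻¹ • (Measure.map (fun y => r⁻¹ • (y - x)) ν).restrict (ball 0 1)

/-- `τ` is a probability tangent measure of the positive measure `ν` at `x`: a weak-* limit, in
the space of measures on the closed unit ball, of a sequence of normalized blow-ups of `ν` at `x`
at scales `rⱼ ↓ 0`. -/
def IsProbTangent {d : ℕ} (ν : Measure (EuclideanSpace ℝ (Fin d)))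
    (x : EuclideanSpace ℝ (Fin d)) (τ : Measure (EuclideanSpace ℝ (Fin d))) : Prop :=
  τ (closedBall (0 : EuclideanSpace ℝ (Fin d)) 1)ᶜ = 0 ∧
  ∃ r : ℕ → ℝ, (∀ j, 0 < r j) ∧ Tendsto r atTop (𝓝 0) ∧ (∀ j, ν (ball x (r j)) ≠ 0) ∧
    ∀ f : EuclideanSpace ℝ (Fin d) → ℝ, Continuous f →
      Tendsto (fun j => ∫ y, f y ∂(blowUp ν x (r j))) atTop (𝓝 (∫ y, f y ∂τ))

/-- A positive measure `τ` is `V`-invariant on the open set `U` if its distributional directional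
derivative along every `v ∈ V` vanishes on `U`. -/
def VInvariantOn {d : ℕ} (τ : Measure (EuclideanSpace ℝ (Fin d)))
    (V : Submodule ℝ (EuclideanSpace ℝ (Fin d))) (U : Set (EuclideanSpace ℝ (Fin d))) : Prop :=
  ∀ v ∈ V, ∀ φ : EuclideanSpace ℝ (Fin d) → ℝ,
    ContDiff ℝ (⊤ : ℕ∞) φ → HasCompactSupport φ → tsupport φ ⊆ U →
    ∫ y, fderiv ℝ φ y v ∂τ = 0

/-! ### Mass bound for invariant measures -/

/-- An infinitesimally `V`-invariant measure on `U` integrates a test function and its translate by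
`v ∈ V` to the same value, provided the whole path of translates stays supported in `U`: the
derivative of `t ↦ ∫ φ (y - t • v) dτ` is the integral of a directional derivative of a test
function on `U`. -/
theorem VInvariantOn.integral_comp_sub {d : ℕ} {τ : Measure (EuclideanSpace ℝ (Fin d))}
    [IsFiniteMeasure τ] {V : Submodule ℝ (EuclideanSpace ℝ (Fin d))}
    {U : Set (EuclideanSpace ℝ (Fin d))} (hτ : VInvariantOn τ V U)
    {φ : EuclideanSpace ℝ (Fin d) → ℝ} (hφ : ContDiff ℝ (⊤ : ℕ∞) φ) (hc : HasCompactSupport φ)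
    {v : EuclideanSpace ℝ (Fin d)} (hv : v ∈ V)
    (hU : ∀ t ∈ Set.Icc (0 : ℝ) 1, ∀ y ∈ tsupport φ, y + t • v ∈ U) :
    ∫ y, φ (y - v) ∂τ = ∫ y, φ y ∂τ := by
  obtain ⟨C, hC⟩ := (hφ.continuous_fderiv (by simp)).bounded_above_of_compact_support
    (hc.fderiv (𝕜 := ℝ))
  obtain ⟨C', hC'⟩ := hφ.continuous.bounded_above_of_compact_support hc
  have hder : ∀ t : ℝ, HasDerivAt (fun s : ℝ => ∫ y, φ (y - s • v) ∂τ)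
      (∫ y, -(fderiv ℝ φ (y - t • v) v) ∂τ) t := by
    intro t
    refine (hasDerivAt_integral_of_dominated_loc_of_deriv_le (s := Set.univ)
      (F := fun s y => φ (y - s • v)) (F' := fun s y => -(fderiv ℝ φ (y - s • v) v))
      (bound := fun _ => C * ‖v‖) Filter.univ_mem ?_ ?_ ?_ ?_ ?_ ?_).2
    · exact Eventually.of_forall fun s =>
        (hφ.continuous.comp (continuous_id.sub continuous_const)).aestronglyMeasurable
    · exact Integrable.of_bound
        (hφ.continuous.comp (continuous_id.sub continuous_const)).aestronglyMeasurable C'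
        (Eventually.of_forall fun y => hC' _)
    · refine Continuous.aestronglyMeasurable ?_
      exact (((hφ.continuous_fderiv (by simp)).comp
        (continuous_id.sub continuous_const)).clm_apply continuous_const).neg
    · refine Eventually.of_forall fun y s _ => ?_
      rw [norm_neg]
      exact ((fderiv ℝ φ (y - s • v)).le_opNorm v).trans
        (mul_le_mul_of_nonneg_right (hC _) (norm_nonneg _))
    · exact integrable_const _
    · refine Eventually.of_forall fun y s _ => ?_
      have h1 : HasDerivAt (fun s : ℝ => y - s • v) (-v) s := by
        simpa using ((hasDerivAt_id s).smul_const v).const_sub y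
      have h2 := ((hφ.differentiable (by simp)) (y - s • v)).hasFDerivAt.comp_hasDerivAt s h1
      simpa [Function.comp_def] using h2
  have hzero : ∀ t ∈ Set.Icc (0 : ℝ) 1, ∫ y, -(fderiv ℝ φ (y - t • v) v) ∂τ = 0 := by
    intro t ht
    have hshift : tsupport (fun y => φ (y - t • v)) ⊆ U := by
      intro y hy
      have : y - t • v ∈ tsupport φ :=
        tsupport_comp_subset_preimage φ (f := fun y => y - t • v) (by fun_prop) hy
      simpa using hU t ht _ this
    have h := hτ v hv (fun y => φ (y - t • v)) (hφ.comp (contDiff_id.sub contDiff_const))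
      (hc.comp_homeomorph (Homeomorph.subRight (t • v))) hshift
    simp only [fderiv_comp_sub] at h
    rw [integral_neg, h, neg_zero]
  have := constant_of_has_deriv_right_zero (f := fun s : ℝ => ∫ y, φ (y - s • v) ∂τ)
    (a := 0) (b := 1) (fun t _ => (hder t).continuousAt.continuousWithinAt)
    (fun t ht => by
      have h := hder t
      rw [hzero t ⟨ht.1, ht.2.le⟩] at h
      exact h.hasDerivWithinAt) 1 ⟨zero_le_one, le_rfl⟩
  simpa using this

/-- A `V`-invariant measure on the unit ball with `dim V ≥ ℓ` charges the ball of radius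
`s = 1 / (8 M ℓ)` with at most a fraction `M ^ (-ℓ)` of its mass: `V ∩ B_{1/2}` contains `M ^ ℓ`
points at mutual distance at least `4 * s`, and the translates of a bump function supported in the
ball of radius `2 * s` to these points all have the same integral, with disjoint supports. -/
theorem VInvariantOn.pow_mul_integral_bump_le {d : ℕ} {τ : Measure (EuclideanSpace ℝ (Fin d))}
    [IsFiniteMeasure τ] {V : Submodule ℝ (EuclideanSpace ℝ (Fin d))}
    (hτ : VInvariantOn τ V (ball 0 1)) {ℓ : ℕ} (hℓ : 0 < ℓ) (hV : ℓ ≤ Module.finrank ℝ V)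
    {M : ℕ} (hM : 0 < M) {s : ℝ} (hs : 8 * s * M * ℓ = 1)
    (φ : ContDiffBump (0 : EuclideanSpace ℝ (Fin d))) (hφ : φ.rOut = 2 * s) :
    (M : ℝ) ^ ℓ * ∫ y, φ y ∂τ ≤ τ.real (ball 0 1) := by
  have hs0 : 0 < s := by have := φ.rOut_pos; linarith
  have hM1 : (1 : ℝ) ≤ M := by exact_mod_cast hM
  have hℓ1 : (1 : ℝ) ≤ ℓ := by exact_mod_cast hℓ
  have hs8 : 8 * s ≤ 1 := by
    have : 1 ≤ (M : ℝ) * ℓ := by nlinarith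
    nlinarith
  let b := stdOrthonormalBasis ℝ V
  let e : Fin ℓ → EuclideanSpace ℝ (Fin d) := fun i => (b (Fin.castLE hV i) : V)
  have he : Orthonormal ℝ e := by
    have h1 : Orthonormal ℝ (fun i => ((b i : V) : EuclideanSpace ℝ (Fin d))) :=
      b.orthonormal.comp_linearIsometry V.subtypeₗᵢ
    exact h1.comp _ (Fin.castLE_injective hV)
  -- the grid of mesh `4 * s` spanned by these vectors
  let v : (Fin ℓ → Fin M) → EuclideanSpace ℝ (Fin d) :=
    fun n => ∑ i, (4 * s * (n i : ℝ)) • e i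
  have hvV : ∀ n, v n ∈ V := fun n =>
    Submodule.sum_mem _ fun i _ => Submodule.smul_mem _ _ (Subtype.coe_prop _)
  have hvnorm : ∀ n, ‖v n‖ ≤ 1 / 2 := by
    intro n
    calc ‖v n‖ ≤ ∑ i : Fin ℓ, ‖(4 * s * (n i : ℝ)) • e i‖ := norm_sum_le _ _
      _ ≤ ∑ i : Fin ℓ, 4 * s * M := by
        refine Finset.sum_le_sum fun i _ => ?_
        rw [norm_smul, he.1 i, mul_one, Real.norm_of_nonneg (by positivity)]
        have : ((n i : ℕ) : ℝ) ≤ M := by exact_mod_cast (n i).2.le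
        gcongr
      _ = 1 / 2 := by
        simp only [Finset.sum_const, Finset.card_univ, Fintype.card_fin, nsmul_eq_mul]
        linarith
  have hvsep : ∀ n m, n ≠ m → 4 * s ≤ ‖v n - v m‖ := by
    intro n m hnm
    obtain ⟨i, hi⟩ := Function.ne_iff.1 hnm
    have h1 : inner ℝ (e i) (v n - v m) = 4 * s * ((n i : ℝ) - (m i : ℝ)) := by
      rw [inner_sub_right, he.inner_right_fintype, he.inner_right_fintype]
      ring
    have h2 : (1 : ℝ) ≤ |(n i : ℝ) - (m i : ℝ)| := by
      have : (1 : ℤ) ≤ |((n i : ℕ) : ℤ) - ((m i : ℕ) : ℤ)| := by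
        apply Int.one_le_abs
        have : (n i : ℕ) ≠ (m i : ℕ) := fun h => hi (Fin.ext h)
        omega
      exact_mod_cast this
    have h3 := abs_real_inner_le_norm (e i) (v n - v m)
    rw [he.1 i, one_mul, h1, abs_mul, abs_of_pos (by positivity : 0 < 4 * s)] at h3
    nlinarith
  have hsupp : ∀ z, φ z ≠ 0 → ‖z‖ < 2 * s := by
    intro z hz
    have : z ∈ Function.support φ := hz
    rwa [φ.support_eq, hφ, mem_ball_zero_iff] at this
  have htrans : ∀ n, ∫ y, φ (y - v n) ∂τ = ∫ y, φ y ∂τ := by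
    intro n
    refine hτ.integral_comp_sub φ.contDiff φ.hasCompactSupport (hvV n) ?_
    intro t ht y hy
    rw [φ.tsupport_eq, hφ, mem_closedBall_zero_iff] at hy
    rw [mem_ball_zero_iff]
    have h1 : ‖t • v n‖ ≤ 1 / 2 := by
      rw [norm_smul, Real.norm_of_nonneg ht.1]
      nlinarith [hvnorm n, norm_nonneg (v n), ht.2, ht.1]
    linarith [norm_add_le y (t • v n)]
  -- At most one translate is nonzero at any point, because the grid points are `4 * s` apart.
  have hpt : ∀ y, ∑ n, φ (y - v n) ≤ (ball (0 : EuclideanSpace ℝ (Fin d)) 1).indicator 1 y := by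
    intro y
    by_cases hy : ∃ n, φ (y - v n) ≠ 0
    · obtain ⟨n, hn⟩ := hy
      have hyn := hsupp _ hn
      rw [Finset.sum_eq_single n]
      · have hyb : y ∈ ball (0 : EuclideanSpace ℝ (Fin d)) 1 := by
          rw [mem_ball_zero_iff]
          have := norm_add_le (y - v n) (v n)
          rw [sub_add_cancel] at this
          linarith [hvnorm n]
        rw [Set.indicator_of_mem hyb]
        exact φ.le_one
      · intro m _ hmn
        by_contra hm
        have h1 := hsupp _ hm
        have h2 := hvsep m n hmn
        have h3 := norm_sub_le (y - v n) (y - v m)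
        rw [show y - v n - (y - v m) = v m - v n by abel] at h3
        linarith
      · simp
    · push Not at hy
      simp only [hy, Finset.sum_const_zero]
      exact Set.indicator_nonneg (fun _ _ => zero_le_one) _
  have hint : ∀ n, Integrable (fun y => φ (y - v n)) τ := fun n =>
    Integrable.of_bound (φ.continuous.comp (continuous_id.sub continuous_const)).aestronglyMeasurable
      1 (Eventually.of_forall fun y => by
        rw [Real.norm_of_nonneg φ.nonneg]; exact φ.le_one)
  calc (M : ℝ) ^ ℓ * ∫ y, φ y ∂τ = ∑ n : Fin ℓ → Fin M, ∫ y, φ (y - v n) ∂τ := by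
        simp [htrans]
    _ = ∫ y, ∑ n : Fin ℓ → Fin M, φ (y - v n) ∂τ :=
        (integral_finsetSum _ fun n _ => hint n).symm
    _ ≤ ∫ y, (ball (0 : EuclideanSpace ℝ (Fin d)) 1).indicator 1 y ∂τ := by
        refine integral_mono (integrable_finsetSum _ fun n _ => hint n) ?_ hpt
        exact (integrable_const (1 : ℝ)).indicator measurableSet_ball
    _ = τ.real (ball 0 1) := integral_indicator_one measurableSet_ball

/-- The bound of `VInvariantOn.pow_mul_integral_bump_le` is linear in the measure, with a constant
depending on `M` and `ℓ` but not on `V`, so it passes to finite sums of measures that are invariant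
along different subspaces. The summands may be infinite outside the unit ball, hence they are first
restricted to it. -/
theorem pow_mul_integral_bump_le_of_split {d : ℕ} {τ : Measure (EuclideanSpace ℝ (Fin d))}
    [IsFiniteMeasure τ] {k : ℕ} {τs : Fin k → Measure (EuclideanSpace ℝ (Fin d))}
    {Vs : Fin k → Submodule ℝ (EuclideanSpace ℝ (Fin d))}
    {ℓ : ℕ} (hℓ : 0 < ℓ) (hV : ∀ h, ℓ ≤ Module.finrank ℝ (Vs h))
    (hinv : ∀ h, VInvariantOn (τs h) (Vs h) (ball 0 1))
    (hsum : τ.restrict (ball 0 1) = (∑ h, τs h).restrict (ball 0 1))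
    {M : ℕ} (hM : 0 < M) {s : ℝ} (hs : 8 * s * M * ℓ = 1)
    (φ : ContDiffBump (0 : EuclideanSpace ℝ (Fin d))) (hφ : φ.rOut = 2 * s) (hs1 : 2 * s ≤ 1) :
    (M : ℝ) ^ ℓ * ∫ y, φ y ∂τ ≤ τ.real (ball 0 1) := by
  have hsum' : τ.restrict (ball 0 1) = ∑ h, (τs h).restrict (ball 0 1) := by
    rw [hsum]
    ext A hA
    simp [Measure.restrict_apply hA]
  have hle : ∀ h, (τs h).restrict (ball 0 1) ≤ τ.restrict (ball 0 1) := by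
    intro h
    rw [hsum']
    exact Finset.single_le_sum (f := fun h => (τs h).restrict (ball 0 1))
      (fun _ _ => Measure.zero_le _) (Finset.mem_univ h)
  have hfin : ∀ h, IsFiniteMeasure ((τs h).restrict (ball 0 1)) := fun h =>
    isFiniteMeasure_of_le _ (hle h)
  have hinv' : ∀ h, VInvariantOn ((τs h).restrict (ball 0 1)) (Vs h) (ball 0 1) := by
    intro h v hv ψ h1 h2 h3
    rw [setIntegral_eq_integral_of_forall_compl_eq_zero]
    · exact hinv h v hv ψ h1 h2 h3
    · intro y hy
      have : fderiv ℝ ψ y = 0 := by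
        by_contra hne
        exact hy (h3 (support_fderiv_subset ℝ hne))
      simp [this]
  have hφτ : ∫ y, φ y ∂τ = ∑ h, ∫ y, φ y ∂((τs h).restrict (ball 0 1)) := by
    rw [← integral_finsetSum_measure, ← hsum',
      setIntegral_eq_integral_of_forall_compl_eq_zero]
    · intro y hy
      by_contra hne
      have : y ∈ Function.support φ := hne
      rw [φ.support_eq, hφ] at this
      exact hy (ball_subset_ball hs1 this)
    · intro h _
      exact Integrable.of_bound φ.continuous.aestronglyMeasurable
        1 (Eventually.of_forall fun y => by
          rw [Real.norm_of_nonneg φ.nonneg]; exact φ.le_one)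
  have hmass : τ.real (ball 0 1) = ∑ h, ((τs h).restrict (ball 0 1)).real (ball 0 1) := by
    have h1 : τ.real (ball 0 1) = (τ.restrict (ball 0 1)).real (ball 0 1) := by
      simp [measureReal_def]
    rw [h1, hsum']
    simp only [measureReal_def, Measure.coe_finsetSum, Finset.sum_apply]
    exact ENNReal.toReal_sum fun h _ => measure_ne_top _ _
  rw [hφτ, hmass, Finset.mul_sum]
  exact Finset.sum_le_sum fun h _ =>
    (hinv' h).pow_mul_integral_bump_le hℓ (hV h) hM hs φ hφ

/-! ### Blow-ups and compactness -/

theorem blowUp_apply {d : ℕ} (ν : Measure (EuclideanSpace ℝ (Fin d)))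
    (x : EuclideanSpace ℝ (Fin d)) {r : ℝ} (hr : 0 < r) {t : ℝ} (ht : t ≤ 1) :
    blowUp ν x r (ball 0 t) = (ν (ball x r))⁻¹ * ν (ball x (t * r)) := by
  have hmeas : Measurable fun y : EuclideanSpace ℝ (Fin d) => r⁻¹ • (y - x) := by fun_prop
  have hpre : (fun y : EuclideanSpace ℝ (Fin d) => r⁻¹ • (y - x)) ⁻¹' (ball 0 t) =
      ball x (t * r) := by
    ext y
    rw [Set.mem_preimage, mem_ball_zero_iff, mem_ball_iff_norm, norm_smul, norm_inv,
      Real.norm_of_nonneg hr.le, inv_mul_lt_iff₀ hr, mul_comm]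
  rw [blowUp, Measure.smul_apply, Measure.restrict_apply measurableSet_ball,
    Set.inter_eq_left.2 (ball_subset_ball ht), Measure.map_apply hmeas measurableSet_ball, hpre,
    smul_eq_mul]

theorem isProbabilityMeasure_blowUp {d : ℕ} {ν : Measure (EuclideanSpace ℝ (Fin d))}
    {x : EuclideanSpace ℝ (Fin d)} {r : ℝ} (hr : 0 < r) (h0 : ν (ball x r) ≠ 0)
    (h1 : ν (ball x r) ≠ ⊤) : IsProbabilityMeasure (blowUp ν x r) := by
  constructor
  have h := blowUp_apply ν x hr le_rfl
  rw [one_mul, ENNReal.inv_mul_cancel h0 h1] at h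
  rw [← h]
  simp [blowUp]

/-- Any sequence of scales tending to `0` has a subsequence along which the blow-ups converge to a
probability tangent measure. The blow-ups live on the compact closed unit ball, so this is the
sequential compactness of the space of probability measures on a compact metrizable space. -/
theorem exists_isProbTangent_of_seq {d : ℕ} {ν : Measure (EuclideanSpace ℝ (Fin d))}
    {x : EuclideanSpace ℝ (Fin d)} {r : ℕ → ℝ} (hr : ∀ j, 0 < r j)
    (hr0 : Tendsto r atTop (𝓝 0)) (h0 : ∀ j, ν (ball x (r j)) ≠ 0)
    (h1 : ∀ j, ν (ball x (r j)) ≠ ⊤) :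
    ∃ (τ : Measure (EuclideanSpace ℝ (Fin d))) (n : ℕ → ℕ), IsProbabilityMeasure τ ∧
      StrictMono n ∧ IsProbTangent ν x τ ∧
      ∀ f : EuclideanSpace ℝ (Fin d) → ℝ, Continuous f →
        Tendsto (fun j => ∫ y, f y ∂(blowUp ν x (r (n j)))) atTop (𝓝 (∫ y, f y ∂τ)) := by
  let K : Set (EuclideanSpace ℝ (Fin d)) := closedBall 0 1
  have hK : MeasurableSet K := measurableSet_closedBall
  have : CompactSpace K := isCompact_iff_compactSpace.1 (isCompact_closedBall _ _)
  have hprob : ∀ j, IsProbabilityMeasure (blowUp ν x (r j)) := fun j =>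
    isProbabilityMeasure_blowUp (hr j) (h0 j) (h1 j)
  have hmap : ∀ j, ((blowUp ν x (r j)).comap ((↑) : K → _)).map (↑) = blowUp ν x (r j) := by
    intro j
    rw [map_comap_subtype_coe hK, blowUp, Measure.restrict_smul, Measure.restrict_restrict hK,
      Set.inter_eq_right.2 ball_subset_closedBall]
  have hprob' : ∀ j, IsProbabilityMeasure ((blowUp ν x (r j)).comap ((↑) : K → _)) := by
    intro j
    constructor
    have h := (hprob j).measure_univ
    rw [← hmap j, Measure.map_apply measurable_subtype_coe .univ, Set.preimage_univ] at h
    exact h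
  let γ : ℕ → ProbabilityMeasure K := fun j => ⟨_, hprob' j⟩
  obtain ⟨σ, -, n, hn, hlim⟩ :=
    (isCompact_univ (X := ProbabilityMeasure K)).isSeqCompact (x := γ) (fun _ => Set.mem_univ _)
  have hconv : ∀ f : EuclideanSpace ℝ (Fin d) → ℝ, Continuous f →
      Tendsto (fun j => ∫ y, f y ∂(blowUp ν x (r (n j)))) atTop
        (𝓝 (∫ y, f y ∂((σ : Measure K).map (↑)))) := by
    intro f hf
    have h := ProbabilityMeasure.tendsto_iff_forall_integral_tendsto.1 hlim
      (BoundedContinuousFunction.mkOfCompact ⟨fun y : K => f y, hf.comp continuous_subtype_val⟩)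
    have hrw : ∀ ρ : Measure K, ∫ y, f y ∂(ρ.map (↑)) = ∫ y : K, f y ∂ρ := fun ρ =>
      (MeasurableEmbedding.subtype_coe hK).integral_map f
    rw [hrw]
    refine h.congr fun j => ?_
    rw [← hmap (n j), hrw]
    rfl
  refine ⟨(σ : Measure K).map Subtype.val, n,
    Measure.isProbabilityMeasure_map measurable_subtype_coe.aemeasurable, hn,
    ⟨?_, r ∘ n, fun j => hr _, hr0.comp hn.tendsto_atTop, fun j => h0 _, hconv⟩, hconv⟩
  rw [Measure.map_apply measurable_subtype_coe hK.compl]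
  simp [K]

/-! ### From scale-invariant decay to the density -/

/-- If a monotone `F` shrinks by a factor `s ^ κ'` under each contraction `r ↦ s * r` of small
scales, then iterating gives `F r = O(r ^ κ')`, so `F r / r ^ κ → 0` for `κ < κ'`. -/
theorem tendsto_div_rpow_zero_of_decay {F : ℝ → ℝ≥0∞} (hF : Monotone F) {κ κ' s ρ : ℝ}
    (hκ' : 0 < κ') (hκ : κ < κ') (hs0 : 0 < s) (hs1 : s < 1) (hρ : 0 < ρ) (hfin : F ρ ≠ ⊤)
    (hdec : ∀ r, 0 < r → r ≤ ρ → F (s * r) ≤ ENNReal.ofReal (s ^ κ') * F r) :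
    Tendsto (fun r : ℝ => F r / ENNReal.ofReal (r ^ κ)) (𝓝[>] (0 : ℝ)) (𝓝 0) := by
  have hiter : ∀ n : ℕ, F (s ^ n * ρ) ≤ ENNReal.ofReal ((s ^ n) ^ κ') * F ρ := by
    intro n
    induction n with
    | zero => simp
    | succ n ih =>
      have hpow : s ^ n ≤ 1 := pow_le_one₀ hs0.le hs1.le
      calc F (s ^ (n + 1) * ρ) = F (s * (s ^ n * ρ)) := by ring_nf
        _ ≤ ENNReal.ofReal (s ^ κ') * F (s ^ n * ρ) :=
          hdec _ (by positivity) (by nlinarith)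
        _ ≤ ENNReal.ofReal (s ^ κ') * (ENNReal.ofReal ((s ^ n) ^ κ') * F ρ) := by gcongr
        _ = ENNReal.ofReal ((s ^ (n + 1)) ^ κ') * F ρ := by
          rw [← mul_assoc, ← ENNReal.ofReal_mul (by positivity),
            ← Real.mul_rpow hs0.le (by positivity), ← pow_succ']
  -- Compare `r` with the scale `s ^ n * ρ` for which `s ^ (n + 1) * ρ < r ≤ s ^ n * ρ`.
  have hbound : ∀ r, 0 < r → r ≤ ρ →
      F r / ENNReal.ofReal (r ^ κ) ≤
        ENNReal.ofReal (((s * ρ)⁻¹) ^ κ' * r ^ (κ' - κ)) * F ρ := by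
    intro r hr hrρ
    obtain ⟨n, hn1, hn2⟩ := exists_nat_pow_near_of_lt_one (x := r / ρ) (by positivity)
      ((div_le_one hρ).2 hrρ) hs0 hs1
    rw [div_le_iff₀ hρ] at hn2
    rw [lt_div_iff₀ hρ] at hn1
    have hsn : s ^ n ≤ (s * ρ)⁻¹ * r := by
      rw [inv_mul_eq_div, le_div_iff₀ (by positivity)]
      calc s ^ n * (s * ρ) = s ^ (n + 1) * ρ := by ring
        _ ≤ r := hn1.le
    rw [ENNReal.div_le_iff (by simpa using Real.rpow_pos_of_pos hr κ) ENNReal.ofReal_ne_top]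
    calc F r ≤ F (s ^ n * ρ) := hF hn2
      _ ≤ ENNReal.ofReal ((s ^ n) ^ κ') * F ρ := hiter n
      _ ≤ ENNReal.ofReal (((s * ρ)⁻¹ * r) ^ κ') * F ρ := by gcongr
      _ = ENNReal.ofReal (((s * ρ)⁻¹) ^ κ' * r ^ (κ' - κ)) * F ρ * ENNReal.ofReal (r ^ κ) := by
        rw [mul_right_comm, ← ENNReal.ofReal_mul (by positivity), mul_assoc, ← Real.rpow_add hr,
          sub_add_cancel, Real.mul_rpow (by positivity) hr.le]
  have hlim : Tendsto (fun r : ℝ => ENNReal.ofReal (((s * ρ)⁻¹) ^ κ' * r ^ (κ' - κ)) * F ρ)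
      (𝓝[>] (0 : ℝ)) (𝓝 0) := by
    have h1 : Tendsto (fun r : ℝ => ((s * ρ)⁻¹) ^ κ' * r ^ (κ' - κ)) (𝓝[>] (0 : ℝ)) (𝓝 0) := by
      have h := ((Real.continuousAt_rpow_const 0 (κ' - κ) (Or.inr (by linarith))).tendsto.mono_left
        (nhdsWithin_le_nhds (s := Set.Ioi (0 : ℝ)))).const_mul (((s * ρ)⁻¹) ^ κ')
      rwa [Real.zero_rpow (by linarith), mul_zero] at h
    have h2 := ENNReal.Tendsto.mul_const (ENNReal.tendsto_ofReal h1) (b := F ρ) (Or.inr hfin)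
    simpa using h2
  refine tendsto_of_tendsto_of_tendsto_of_le_of_le' tendsto_const_nhds hlim
    (Eventually.of_forall fun _ => zero_le) ?_
  filter_upwards [Ioc_mem_nhdsGT hρ] with r hr using hbound r hr.1 hr.2

/-- A power `κ' < ℓ` of `C * M` is beaten by `M ^ ℓ` once `M` is large. -/
theorem exists_nat_rpow_lt_pow {ℓ : ℕ} {κ' C : ℝ} (hκ' : κ' < ℓ) (hC : 0 < C) :
    ∃ M : ℕ, 0 < M ∧ (C * M) ^ κ' < (M : ℝ) ^ ℓ := by
  have h1 : Tendsto (fun M : ℕ => (M : ℝ) ^ ((ℓ : ℝ) - κ')) atTop atTop :=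
    (tendsto_rpow_atTop (by linarith)).comp tendsto_natCast_atTop_atTop
  obtain ⟨M, hM, hM0⟩ := ((h1.eventually_gt_atTop (C ^ κ')).and (eventually_gt_atTop 0)).exists
  refine ⟨M, hM0, ?_⟩
  have hMp : (0 : ℝ) < M := by exact_mod_cast hM0
  rw [Real.mul_rpow hC.le hMp.le]
  calc C ^ κ' * (M : ℝ) ^ κ' < (M : ℝ) ^ ((ℓ : ℝ) - κ') * (M : ℝ) ^ κ' := by gcongr
    _ = (M : ℝ) ^ ℓ := by rw [← Real.rpow_add hMp, sub_add_cancel, Real.rpow_natCast]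

/-- If all tangent measures split into invariant pieces of dimension at least `ℓ`, then for every
`κ' ∈ (0, ℓ)` there is a fixed ratio `s < 1` with `ν (B_{s r}) ≤ s ^ κ' ν (B_r)` at all small
scales. Otherwise some tangent measure would charge a neighbourhood of `B_s` with mass at least
`s ^ κ'`, which exceeds the bound `M ^ (-ℓ)` of `pow_mul_integral_bump_le_of_split`. -/
theorem eventually_decay_of_split {d ℓ : ℕ} {ν : Measure (EuclideanSpace ℝ (Fin d))}
    {x : EuclideanSpace ℝ (Fin d)} {ρ : ℝ} (hρ : 0 < ρ)
    (h0 : ∀ r, 0 < r → r ≤ ρ → ν (ball x r) ≠ 0) (h1 : ν (ball x ρ) ≠ ⊤)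
    (hTan : ∀ τ : Measure (EuclideanSpace ℝ (Fin d)), IsProbTangent ν x τ →
      ∃ (k : ℕ) (τs : Fin k → Measure (EuclideanSpace ℝ (Fin d)))
        (Vs : Fin k → Submodule ℝ (EuclideanSpace ℝ (Fin d))),
        (∀ h, ℓ ≤ Module.finrank ℝ (Vs h)) ∧
        (∀ h, VInvariantOn (τs h) (Vs h) (ball 0 1)) ∧
        τ.restrict (ball 0 1) = (∑ h, τs h).restrict (ball 0 1))
    {κ' : ℝ} (hκ' : 0 < κ') (hκℓ : κ' < ℓ) :
    ∃ s : ℝ, 0 < s ∧ s < 1 ∧ ∃ ε > 0, ε ≤ ρ ∧ ∀ r, 0 < r → r ≤ ε →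
      ν (ball x (s * r)) ≤ ENNReal.ofReal (s ^ κ') * ν (ball x r) := by
  have hℓ : 0 < ℓ := by
    have : (0 : ℝ) < ℓ := hκ'.trans hκℓ
    exact_mod_cast this
  have hℓp : (1 : ℝ) ≤ ℓ := by exact_mod_cast hℓ
  obtain ⟨M, hM, hMκ⟩ := exists_nat_rpow_lt_pow (C := 8 * ℓ) hκℓ (by positivity)
  have hMp : (1 : ℝ) ≤ M := by exact_mod_cast hM
  -- This `s` lets the translated balls of radius `2 * s`, indexed by the grid with `M` points in
  -- each of the `ℓ` directions and mesh `4 * s`, fit inside the unit ball.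
  obtain ⟨s, hs⟩ : ∃ s : ℝ, s = (8 * (ℓ : ℝ) * M)⁻¹ := ⟨_, rfl⟩
  have hs0 : 0 < s := by rw [hs]; positivity
  have hsM : 8 * s * M * ℓ = 1 := by rw [hs]; field_simp
  have hs8 : 8 * s ≤ 1 := by
    have : 1 ≤ (M : ℝ) * ℓ := by nlinarith
    nlinarith
  refine ⟨s, hs0, by linarith, ?_⟩
  by_contra! hcon
  have hex : ∀ j : ℕ, ∃ r : ℝ, 0 < r ∧ r ≤ ρ / (j + 1) ∧
      ENNReal.ofReal (s ^ κ') * ν (ball x r) < ν (ball x (s * r)) := fun j => by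
    refine hcon (ρ / (j + 1)) (by positivity) (div_le_self hρ.le ?_)
    have : (0 : ℝ) ≤ j := j.cast_nonneg
    linarith
  choose r hr hrj hbig using hex
  have hrρ : ∀ j, r j ≤ ρ := fun j => (hrj j).trans (div_le_self hρ.le (by
    have : (0 : ℝ) ≤ j := j.cast_nonneg
    linarith))
  have hr0 : Tendsto r atTop (𝓝 0) := by
    refine squeeze_zero (fun j => (hr j).le) hrj ?_
    simpa [div_eq_mul_inv] using (tendsto_one_div_add_atTop_nhds_zero_nat (𝕜 := ℝ)).const_mul ρ
  have hne0 : ∀ j, ν (ball x (r j)) ≠ 0 := fun j => h0 _ (hr j) (hrρ j)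
  have hnetop : ∀ j, ν (ball x (r j)) ≠ ⊤ := fun j =>
    measure_ne_top_of_subset (ball_subset_ball (hrρ j)) h1
  obtain ⟨τ, n, hτp, -, hτ, hconv⟩ := exists_isProbTangent_of_seq hr hr0 hne0 hnetop
  obtain ⟨k, τs, Vs, hV, hinv, hsum⟩ := hTan τ hτ
  let φ : ContDiffBump (0 : EuclideanSpace ℝ (Fin d)) := ⟨s, 2 * s, hs0, by linarith⟩
  have hup := pow_mul_integral_bump_le_of_split hℓ hV hinv hsum hM hsM φ rfl (by linarith)
  have hup' : (M : ℝ) ^ ℓ * ∫ y, φ y ∂τ ≤ 1 := hup.trans measureReal_le_one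
  have hlow : ∀ j, s ^ κ' ≤ ∫ y, φ y ∂(blowUp ν x (r (n j))) := by
    intro j
    have := isProbabilityMeasure_blowUp (hr (n j)) (hne0 (n j)) (hnetop (n j))
    have hmass : s ^ κ' ≤ (blowUp ν x (r (n j))).real (ball 0 s) := by
      rw [measureReal_def, ← ENNReal.ofReal_le_iff_le_toReal (measure_ne_top _ _),
        blowUp_apply ν x (hr _) (by linarith : s ≤ 1), mul_comm, ← div_eq_mul_inv,
        ENNReal.le_div_iff_mul_le (Or.inl (hne0 _)) (Or.inl (hnetop _))]
      exact (hbig (n j)).le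
    refine hmass.trans ?_
    rw [← integral_indicator_one measurableSet_ball]
    refine integral_mono ((integrable_const (1 : ℝ)).indicator measurableSet_ball) ?_ ?_
    · exact Integrable.of_bound φ.continuous.aestronglyMeasurable
        1 (Eventually.of_forall fun y => by
          rw [Real.norm_of_nonneg φ.nonneg]; exact φ.le_one)
    · intro y
      by_cases hy : y ∈ ball (0 : EuclideanSpace ℝ (Fin d)) s
      · rw [Set.indicator_of_mem hy]
        exact (φ.one_of_mem_closedBall (ball_subset_closedBall hy)).ge
      · rw [Set.indicator_of_notMem hy]
        exact φ.nonneg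
  have hlim : s ^ κ' ≤ ∫ y, φ y ∂τ :=
    ge_of_tendsto' (hconv φ φ.continuous) hlow
  have hsinv : s ^ κ' * (8 * (ℓ : ℝ) * M) ^ κ' = 1 := by
    rw [hs, ← Real.mul_rpow (by positivity) (by positivity),
      inv_mul_cancel₀ (by positivity), Real.one_rpow]
  have hsp : 0 < s ^ κ' := Real.rpow_pos_of_pos hs0 _
  have hMpow : (0 : ℝ) < (M : ℝ) ^ ℓ := by positivity
  nlinarith
/-- **Vanishing of upper densities under the invariance criterion.** Let
`μ = μ^{ac} ℒ^d + μ^s` be a positive Radon measure on the open set `Ω ⊆ ℝ^d`, `0 ≤ ℓ ≤ d`, and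
let `x ∈ Ω` with `μ^s(B_r(x)) > 0` for all small `r > 0`.  If every probability tangent measure
`τ ∈ Tan(μ^s, x)` splits on `B₁` as a finite sum `τ = τ₁ + ⋯ + τ_k` of positive measures, each
`V_h`-invariant on `B₁` for some subspace `V_h` with `dim V_h ≥ ℓ`, then the upper `κ`-density
of `μ^s` at `x` vanishes for every `κ ∈ [0, ℓ)`:
`limsup_{r↓0} μ^s(B_r(x))/r^κ = 0`. -/
theorem upper_density_vanishes {d : ℕ} (ℓ : ℕ) (hℓ : ℓ ≤ d)
    (Ω : Set (EuclideanSpace ℝ (Fin d))) (hΩ : IsOpen Ω)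
    (μ μs : Measure (EuclideanSpace ℝ (Fin d))) (a : EuclideanSpace ℝ (Fin d) → ℝ≥0∞)
    -- Lebesgue decomposition `μ = μ^{ac} ℒ^d + μ^s`:
    (hdecomp : μ = volume.withDensity a + μs) (hsing : μs ⟂ₘ volume)
    -- `μ` is a Radon measure on `Ω`:
    (hloc : ∀ K : Set (EuclideanSpace ℝ (Fin d)), K ⊆ Ω → IsCompact K → μ K < ⊤)
    (hsupp : μ Ωᶜ = 0)
    (x : EuclideanSpace ℝ (Fin d)) (hx : x ∈ Ω)
    (hpos : ∃ r₀ > (0 : ℝ), ∀ r : ℝ, 0 < r → r < r₀ → 0 < μs (ball x r))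
    -- splitting of the tangent measures of `μ^s` at `x`:
    (hTan : ∀ τ : Measure (EuclideanSpace ℝ (Fin d)), IsProbTangent μs x τ →
      ∃ (k : ℕ) (τs : Fin k → Measure (EuclideanSpace ℝ (Fin d)))
        (Vs : Fin k → Submodule ℝ (EuclideanSpace ℝ (Fin d))),
        (∀ h, ℓ ≤ Module.finrank ℝ (Vs h)) ∧
        (∀ h, VInvariantOn (τs h) (Vs h) (ball 0 1)) ∧
        τ.restrict (ball 0 1) = (∑ h, τs h).restrict (ball 0 1)) :
    ∀ κ : ℝ, 0 ≤ κ → κ < (ℓ : ℝ) →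
      Filter.limsup (fun r : ℝ => μs (ball x r) / ENNReal.ofReal (r ^ κ))
        (𝓝[>] (0 : ℝ)) = 0 := by
  intro κ hκ0 hκℓ
  have hμs : μs ≤ μ := by rw [hdecomp]; exact Measure.le_add_left le_rfl
  obtain ⟨r₀, hr₀, hpos⟩ := hpos
  obtain ⟨δ, hδ, hδΩ⟩ := Metric.nhds_basis_closedBall.mem_iff.1 (hΩ.mem_nhds hx)
  have hfin : ∀ r ≤ δ, μs (ball x r) ≠ ⊤ := fun r hr =>
    (((measure_mono (ball_subset_closedBall.trans (closedBall_subset_closedBall hr))).trans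
      (hμs _)).trans_lt (hloc _ hδΩ (isCompact_closedBall x δ))).ne
  -- The decay exponent must be strictly larger than `κ` for the quotient to tend to `0`.
  obtain ⟨κ', hκκ', hκ'ℓ⟩ := exists_between hκℓ
  obtain ⟨s, hs0, hs1, ε, hε, hερ, hdec⟩ := eventually_decay_of_split (ν := μs) (x := x)
    (ρ := min δ (r₀ / 2)) (by positivity)
    (fun r hr hr' => (hpos r hr (by linarith [min_le_right δ (r₀ / 2)])).ne')
    (hfin _ (min_le_left _ _)) hTan (hκ0.trans_lt hκκ') hκ'ℓ
  exact (tendsto_div_rpow_zero_of_decay (F := fun r => μs (ball x r))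
    (fun r r' h => measure_mono (ball_subset_ball h)) (hκ0.trans_lt hκκ') hκκ' hs0 hs1 hε
    (hfin _ (hερ.trans (min_le_left _ _))) hdec).limsup_eq
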